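/- arXiv:2411.11261 — 4 statements merged into one kernel-verified Lean document; each statement's English description precedes it below -/
import Mathlib

section
/- For a subspace 𝔳 ⊆ 𝔭 the following are equivalent: (a) 𝔳 is D-invariant (D_X Y ∈ 𝔳 for all X, Y ∈ 𝔳) and R^c-invariant (R^c(X,Y)Z ∈ 𝔳 for all X, Y, Z ∈ 𝔳); (b) there exists a canonically embedded Lie subalgebra 𝔰 of 𝔤 with 𝔰 ∩ 𝔭 = 𝔳. Moreover, when these conditions hold, the subspace 𝔰 = span{[X,Y] : X, Y ∈ 𝔳} + 𝔳 is such a Lie subalgebra, and it decomposes as 𝔰 = {W_𝔨 : W ∈ span{[X,Y] : X, Y ∈ 𝔳}} ⊕ 𝔳. -/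
/-!
Write `z = z_k + z_p` for the decomposition `L = k ⊕ p`.

If a canonically embedded subalgebra `s` meets `p` in `v`, then for `X, Y ∈ v` both components of
`⁅X, Y⁆ ∈ s` lie in `s`; so `⁅X, Y⁆_p ∈ s ⊓ p = v`, and `⁅⁅X, Y⁆_k, Z⁆ ∈ s ⊓ p = v` for `Z ∈ v`.

Conversely, `D`-invariance says that `w_p ∈ v` for `w ∈ bv`, hence `bv + v = bk + v` with `bk ≤ k`.
`Rc`-invariance says that `bk` maps `v` into `v`. As `ad a` for `a ∈ k` preserves both `k` and `p`,
it commutes with the projection to `k`, so for `a ∈ bk` the Leibniz rule gives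
`⁅a, ⁅x, y⁆_k⁆ = (⁅⁅a, x⁆, y⁆ + ⁅x, ⁅a, y⁆⁆)_k ∈ bk`: the space `bk` is a subalgebra. Therefore
`bk + v` is a subalgebra, and it is canonically embedded with `p`-part `v` since `bk ≤ k`, `v ≤ p`.
-/

/-- Let `𝔤 = 𝔨 ⊕ 𝔭` be a reductive decomposition of a finite-dimensional real Lie
algebra, with projections `πk`, `πp`, difference tensor
`D X Y = (1/2)[X,Y]_𝔭` and canonical curvature `Rc X Y Z = -[[X,Y]_𝔨, Z]`.
For a subspace `𝔳 ⊆ 𝔭` the following are equivalent: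
(a) `𝔳` is `D`-invariant and `Rc`-invariant;
(b) there is a canonically embedded Lie subalgebra `𝔰 ⊆ 𝔤` with `𝔰 ∩ 𝔭 = 𝔳`.
Moreover, in that case `𝔰 = span[𝔳,𝔳] + 𝔳` is such a subalgebra and it
decomposes as `𝔰 = (span[𝔳,𝔳])_𝔨 ⊕ 𝔳`. -/
theorem dInvariant_Rc_invariant_iff_canonically_embedded
    (L : Type*) [LieRing L] [LieAlgebra ℝ L] [FiniteDimensional ℝ L]
    (k p : Submodule ℝ L) (hcompl : IsCompl k p)
    (hkk : ∀ x ∈ k, ∀ y ∈ k, ⁅x, y⁆ ∈ k)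
    (hkp : ∀ x ∈ k, ∀ y ∈ p, ⁅x, y⁆ ∈ p)
    (πk πp : L → L)
    (hdec : ∀ z : L, πk z ∈ k ∧ πp z ∈ p ∧ πk z + πp z = z)
    (D : L → L → L) (hD : ∀ X Y : L, D X Y = (2 : ℝ)⁻¹ • πp ⁅X, Y⁆)
    (Rc : L → L → L → L) (hRc : ∀ X Y Z : L, Rc X Y Z = -⁅πk ⁅X, Y⁆, Z⁆)
    (v : Submodule ℝ L) (hv : v ≤ p)
    (bv : Submodule ℝ L)
    (hbv : bv = Submodule.span ℝ {z : L | ∃ x ∈ v, ∃ y ∈ v, z = ⁅x, y⁆})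
    (bk : Submodule ℝ L)
    (hbk : bk = Submodule.span ℝ (πk '' (bv : Set L))) :
    (((∀ X ∈ v, ∀ Y ∈ v, D X Y ∈ v) ∧ (∀ X ∈ v, ∀ Y ∈ v, ∀ Z ∈ v, Rc X Y Z ∈ v)) ↔
      (∃ s : Submodule ℝ L, (∀ x ∈ s, ∀ y ∈ s, ⁅x, y⁆ ∈ s) ∧
        s = (s ⊓ k) ⊔ (s ⊓ p) ∧ s ⊓ p = v)) ∧
    (((∀ X ∈ v, ∀ Y ∈ v, D X Y ∈ v) ∧ (∀ X ∈ v, ∀ Y ∈ v, ∀ Z ∈ v, Rc X Y Z ∈ v)) →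
      ((∀ x ∈ bv ⊔ v, ∀ y ∈ bv ⊔ v, ⁅x, y⁆ ∈ bv ⊔ v) ∧
        (bv ⊔ v) = ((bv ⊔ v) ⊓ k) ⊔ ((bv ⊔ v) ⊓ p) ∧ (bv ⊔ v) ⊓ p = v ∧
        bv ⊔ v = bk ⊔ v ∧ Disjoint bk v)) := by
  have huniq : ∀ a ∈ k, ∀ b ∈ p, πk (a + b) = a ∧ πp (a + b) = b := by
    intro a ha b hb
    obtain ⟨h1, h2, h3⟩ := hdec (a + b)
    have e : πk (a + b) - a = b - πp (a + b) := by
      rw [sub_eq_sub_iff_add_eq_add, h3, add_comm]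
    have h0 : πk (a + b) - a = 0 := by
      refine Submodule.disjoint_def.mp hcompl.disjoint _ (k.sub_mem h1 ha) ?_
      rw [e]
      exact p.sub_mem hb h2
    have h0' := h0
    rw [e] at h0'
    exact ⟨sub_eq_zero.mp h0, (sub_eq_zero.mp h0').symm⟩
  have hadd : ∀ x y, πk (x + y) = πk x + πk y ∧ πp (x + y) = πp x + πp y := by
    intro x y
    obtain ⟨a1, a2, a3⟩ := hdec x
    obtain ⟨b1, b2, b3⟩ := hdec y
    have h := huniq _ (k.add_mem a1 b1) _ (p.add_mem a2 b2)
    rwa [add_add_add_comm, a3, b3] at h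
  have hsmul : ∀ (c : ℝ) x, πk (c • x) = c • πk x ∧ πp (c • x) = c • πp x := by
    intro c x
    obtain ⟨a1, a2, a3⟩ := hdec x
    have h := huniq _ (k.smul_mem c a1) _ (p.smul_mem c a2)
    rwa [← smul_add, a3] at h
  have hzero : πk 0 = 0 ∧ πp 0 = 0 := by
    simpa using huniq 0 k.zero_mem 0 p.zero_mem
  have hbr : ∀ x ∈ v, ∀ y ∈ v, ⁅x, y⁆ ∈ bv := by
    intro x hx y hy
    rw [hbv]
    exact Submodule.subset_span ⟨x, hx, y, hy, rfl⟩
  have hbkmem : ∀ w ∈ bv, πk w ∈ bk := by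
    intro w hw
    rw [hbk]
    exact Submodule.subset_span ⟨w, hw, rfl⟩
  have hbkk : bk ≤ k := by
    rw [hbk, Submodule.span_le]
    rintro _ ⟨w, -, rfl⟩
    exact (hdec w).1
  have main : ((∀ X ∈ v, ∀ Y ∈ v, D X Y ∈ v) ∧
      (∀ X ∈ v, ∀ Y ∈ v, ∀ Z ∈ v, Rc X Y Z ∈ v)) →
      ((∀ x ∈ bv ⊔ v, ∀ y ∈ bv ⊔ v, ⁅x, y⁆ ∈ bv ⊔ v) ∧
        (bv ⊔ v) = ((bv ⊔ v) ⊓ k) ⊔ ((bv ⊔ v) ⊓ p) ∧ (bv ⊔ v) ⊓ p = v ∧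
        bv ⊔ v = bk ⊔ v ∧ Disjoint bk v) := by
    rintro ⟨hDv, hRv⟩
    have hpv : ∀ w ∈ bv, πp w ∈ v := by
      intro w hw
      rw [hbv] at hw
      induction hw using Submodule.span_induction with
      | mem z hz =>
        obtain ⟨x, hx, y, hy, rfl⟩ := hz
        have h := v.smul_mem (2 : ℝ) (hDv x hx y hy)
        rwa [hD, smul_smul, mul_inv_cancel₀ two_ne_zero, one_smul] at h
      | zero => rw [hzero.2]; exact v.zero_mem
      | add x y _ _ hx hy => rw [(hadd x y).2]; exact v.add_mem hx hy
      | smul c x _ hx => rw [(hsmul c x).2]; exact v.smul_mem c hx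
    have hkv : ∀ w ∈ bv, ∀ z ∈ v, ⁅πk w, z⁆ ∈ v := by
      intro w hw z hz
      rw [hbv] at hw
      induction hw using Submodule.span_induction with
      | mem w hw =>
        obtain ⟨x, hx, y, hy, rfl⟩ := hw
        have h := hRv x hx y hy z hz
        rw [hRc] at h
        exact neg_mem_iff.mp h
      | zero => rw [hzero.1, zero_lie]; exact v.zero_mem
      | add x y _ _ hx hy => rw [(hadd x y).1, add_lie]; exact v.add_mem hx hy
      | smul c x _ hx => rw [(hsmul c x).1, smul_lie]; exact v.smul_mem c hx
    have hbkv : ∀ a ∈ bk, ∀ z ∈ v, ⁅a, z⁆ ∈ v := by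
      intro a ha z hz
      rw [hbk] at ha
      induction ha using Submodule.span_induction with
      | mem a ha =>
        obtain ⟨w, hw, rfl⟩ := ha
        exact hkv w hw z hz
      | zero => rw [zero_lie]; exact v.zero_mem
      | add x y _ _ hx hy => rw [add_lie]; exact v.add_mem hx hy
      | smul c x _ hx => rw [smul_lie]; exact v.smul_mem c hx
    -- `ad a` with `a ∈ k` commutes with the projection to `k`
    have hcomm : ∀ a ∈ k, ∀ w, πk ⁅a, w⁆ = ⁅a, πk w⁆ := by
      intro a ha w
      obtain ⟨h1, h2, h3⟩ := hdec w
      have h := (huniq _ (hkk a ha _ h1) _ (hkp a ha _ h2)).1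
      rwa [← lie_add, h3] at h
    have hbvad : ∀ a ∈ bk, ∀ w ∈ bv, ⁅a, w⁆ ∈ bv := by
      intro a ha w hw
      rw [hbv] at hw
      induction hw using Submodule.span_induction with
      | mem w hw =>
        obtain ⟨x, hx, y, hy, rfl⟩ := hw
        rw [leibniz_lie]
        exact bv.add_mem (hbr _ (hbkv a ha x hx) y hy) (hbr x hx _ (hbkv a ha y hy))
      | zero => rw [lie_zero]; exact bv.zero_mem
      | add x y _ _ hx hy => rw [lie_add]; exact bv.add_mem hx hy
      | smul c x _ hx => rw [lie_smul]; exact bv.smul_mem c hx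
    have hbkbk : ∀ a ∈ bk, ∀ b ∈ bk, ⁅a, b⁆ ∈ bk := by
      intro a ha b hb
      rw [hbk] at hb
      induction hb using Submodule.span_induction with
      | mem b hb =>
        obtain ⟨w, hw, rfl⟩ := hb
        rw [← hcomm a (hbkk ha) w]
        exact hbkmem _ (hbvad a ha w hw)
      | zero => rw [lie_zero]; exact bk.zero_mem
      | add x y _ _ hx hy => rw [lie_add]; exact bk.add_mem hx hy
      | smul c x _ hx => rw [lie_smul]; exact bk.smul_mem c hx
    have heq : bv ⊔ v = bk ⊔ v := by
      apply le_antisymm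
      · refine sup_le (fun w hw => ?_) le_sup_right
        rw [← (hdec w).2.2]
        exact Submodule.add_mem_sup (hbkmem w hw) (hpv w hw)
      · refine sup_le ?_ le_sup_right
        rw [hbk, Submodule.span_le]
        rintro _ ⟨w, hw, rfl⟩
        rw [eq_sub_of_add_eq (hdec w).2.2]
        exact Submodule.sub_mem _ (le_sup_left (a := bv) hw) (le_sup_right (a := bv) (hpv w hw))
    refine ⟨?_, ?_, ?_, heq, hcompl.disjoint.mono hbkk hv⟩
    · intro z hz w hw
      rw [heq] at hz hw
      obtain ⟨a, ha, x, hx, rfl⟩ := Submodule.mem_sup.mp hz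
      obtain ⟨b, hb, y, hy, rfl⟩ := Submodule.mem_sup.mp hw
      rw [add_lie, lie_add, lie_add]
      have h1 : ⁅a, b⁆ ∈ bv ⊔ v := heq ▸ le_sup_left (b := v) (hbkbk a ha b hb)
      have h2 : ⁅a, y⁆ ∈ bv ⊔ v := le_sup_right (a := bv) (hbkv a ha y hy)
      have h3 : ⁅x, b⁆ ∈ bv ⊔ v := by
        rw [← lie_skew]
        exact le_sup_right (a := bv) (v.neg_mem (hbkv b hb x hx))
      have h4 : ⁅x, y⁆ ∈ bv ⊔ v := le_sup_left (b := v) (hbr x hx y hy)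
      exact Submodule.add_mem _ (Submodule.add_mem _ h1 h2) (Submodule.add_mem _ h3 h4)
    · apply le_antisymm
      · nth_rewrite 1 [heq]
        refine sup_le_sup (le_inf ?_ hbkk) (le_inf le_sup_right hv)
        rw [heq]
        exact le_sup_left
      · exact sup_le inf_le_left inf_le_left
    · apply le_antisymm
      · rintro z ⟨hz, hzp⟩
        rw [heq] at hz
        obtain ⟨a, ha, x, hx, rfl⟩ := Submodule.mem_sup.mp hz
        have hap : a ∈ p := (Submodule.add_mem_iff_left p (hv hx)).mp hzp
        rw [Submodule.disjoint_def.mp hcompl.disjoint a (hbkk ha) hap, zero_add]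
        exact hx
      · exact le_inf le_sup_right hv
  refine ⟨⟨fun h => ⟨bv ⊔ v, (main h).1, (main h).2.1, (main h).2.2.1⟩, ?_⟩, main⟩
  rintro ⟨s, hs, hsk, hsp⟩
  have hvs : v ≤ s := hsp ▸ inf_le_left
  have hcomp : ∀ z ∈ s, πk z ∈ s ∧ πp z ∈ v := by
    intro z hz
    rw [hsk] at hz
    obtain ⟨a, ha, b, hb, rfl⟩ := Submodule.mem_sup.mp hz
    obtain ⟨e1, e2⟩ := huniq a ha.2 b hb.2
    rw [e1, e2]
    exact ⟨ha.1, hsp ▸ hb⟩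
  constructor
  · intro X hX Y hY
    rw [hD]
    exact v.smul_mem _ (hcomp _ (hs X (hvs hX) Y (hvs hY))).2
  · intro X hX Y hY Z hZ
    rw [hRc, ← hsp]
    exact Submodule.neg_mem _ ⟨hs _ (hcomp _ (hs X (hvs hX) Y (hvs hY))).1 Z (hvs hZ),
      hkp _ (hdec _).1 Z (hv hZ)⟩
end

section
/- If a subspace 𝔳 ⊆ 𝔭 satisfies R(X,Y)Z ∈ 𝔳 for all X, Y, Z ∈ 𝔳, and 𝔳 contains a nonzero vector of 𝔭₁ or a nonzero vector of 𝔭₂, then 𝔳 = (𝔳 ∩ 𝔭₁) ⊕ (𝔳 ∩ 𝔭₂). (Algebraic form of: every totally geodesic subspace of nearly Kähler ℂP³ containing a vertical or a horizontal vector of the twistor fibration is well-positioned.) -/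
/-! The element `mk b c q` of `𝔭` has vertical part `b j + c k` and horizontal part `q ∈ ℍ`.
For a fixed nonzero `X ∈ 𝔳`, curvature invariance makes `𝔳` stable under the operator
`J_X : Y ↦ R(X,Y)X`. The idea is that, when `X` is purely vertical or purely horizontal, `J_X` is
diagonalizable, preserves `𝔭₁` and `𝔭₂`, and some polynomial in it is a nonzero multiple of the
projection of `𝔭` onto `𝔭₁` or `𝔭₂`:

* for `X = (b, c, 0)` and `N = b² + c²`, the eigenvalues are `0` and `-4N` on `𝔭₁`, and `-N/4`
  on `𝔭₂`, so `J(J + 4N)` is a nonzero multiple of the projection onto `𝔭₂` (`Rmap_vertical`);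
* for `X = (0, 0, q)` and `N = |q|²`, writing horizontal vectors as `q s`, the eigenvalues are
  `-N/2` on `𝔭₁`, and `0`, `-4N`, `-5N/2`, `-5N/2` on the four components of `s`, so
  `J(J + 4N)(J + 5N/2)` is a nonzero multiple of the projection onto `𝔭₁` (`Rmap_horizontal`).

Hence `𝔳` is stable under the projections onto `𝔭₁` and `𝔭₂`, which is the claim. -/

/- Setup: the homogeneous nearly Kähler `ℂP³ = Sp(2)/(U(1)×Sp(1))`.
`𝔤 = 𝔰𝔭(2) ⊆ Mat₂(ℍ)`, `𝔨 ≅ 𝔲(1) ⊕ 𝔰𝔭(1)` the diagonal subalgebra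
`{diag(a i, q)}`, and `𝔭` its orthogonal complement, with orthonormal basis
`e₁,…,e₆` as in the paper; `𝔭₁ = span{e₁,e₂}`, `𝔭₂ = span{e₃,…,e₆}`. -/

noncomputable section
open Matrix

abbrev Mq := Matrix (Fin 2) (Fin 2) (Quaternion ℝ)

def qi : Quaternion ℝ := ⟨0, 1, 0, 0⟩
def qj : Quaternion ℝ := ⟨0, 0, 1, 0⟩
def qk : Quaternion ℝ := ⟨0, 0, 0, 1⟩

def e1 : Mq := (Real.sqrt 2)⁻¹ • !![qj, 0; 0, 0]
def e2 : Mq := (Real.sqrt 2)⁻¹ • !![qk, 0; 0, 0]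
def e3 : Mq := (2 : ℝ)⁻¹ • !![0, -1; 1, 0]
def e4 : Mq := (2 : ℝ)⁻¹ • !![0, qi; qi, 0]
def e5 : Mq := (2 : ℝ)⁻¹ • !![0, qj; qj, 0]
def e6 : Mq := (2 : ℝ)⁻¹ • !![0, qk; qk, 0]

/-- `𝔨 = {diag(a i, q) : a ∈ ℝ, q ∈ Im ℍ}`. -/
def kAlg : Submodule ℝ Mq :=
  Submodule.span ℝ {!![qi, 0; 0, 0], !![0, 0; 0, qi], !![0, 0; 0, qj], !![0, 0; 0, qk]}

/-- `𝔭`, the orthogonal complement of `𝔨` in `𝔰𝔭(2)`. -/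
def pAlg : Submodule ℝ Mq := Submodule.span ℝ {e1, e2, e3, e4, e5, e6}

/-- `𝔤 = 𝔰𝔭(2) = 𝔨 ⊕ 𝔭`. -/
def gAlg : Submodule ℝ Mq := kAlg ⊔ pAlg

/-- vertical submodule `𝔭₁ = span{e₁,e₂}`. -/
def p1 : Submodule ℝ Mq := Submodule.span ℝ {e1, e2}

/-- horizontal submodule `𝔭₂ = span{e₃,e₄,e₅,e₆}`. -/
def p2 : Submodule ℝ Mq := Submodule.span ℝ {e3, e4, e5, e6}

/-- difference tensor `D_X Y = (1/2)[X,Y]_𝔭`. -/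
def Dmap (πp : Mq → Mq) (X Y : Mq) : Mq := (2 : ℝ)⁻¹ • πp ⁅X, Y⁆

/-- curvature tensor
`R(X,Y)Z = D_X D_Y Z − D_Y D_X Z − [[X,Y]_𝔨, Z] − D_{[X,Y]_𝔭} Z`. -/
def Rmap (πk πp : Mq → Mq) (X Y Z : Mq) : Mq :=
  Dmap πp X (Dmap πp Y Z) - Dmap πp Y (Dmap πp X Z) - ⁅πk ⁅X, Y⁆, Z⁆
    - Dmap πp (πp ⁅X, Y⁆) Z

namespace CP3

open scoped Quaternion

/-- The quaternion `x + y i + z j + w k`. -/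
def quat (x y z w : ℝ) : Quaternion ℝ := ⟨x, y, z, w⟩

@[simp] lemma re_quat (x y z w : ℝ) : (quat x y z w).re = x := rfl
@[simp] lemma imI_quat (x y z w : ℝ) : (quat x y z w).imI = y := rfl
@[simp] lemma imJ_quat (x y z w : ℝ) : (quat x y z w).imJ = z := rfl
@[simp] lemma imK_quat (x y z w : ℝ) : (quat x y z w).imK = w := rfl

lemma quat_eta (q : Quaternion ℝ) : quat q.re q.imI q.imJ q.imK = q := rfl

lemma qi_eq : qi = quat 0 1 0 0 := rfl
lemma qj_eq : qj = quat 0 0 1 0 := rfl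
lemma qk_eq : qk = quat 0 0 0 1 := rfl

lemma Mq_ext {A B : Mq} (h₀₀ : A 0 0 = B 0 0) (h₀₁ : A 0 1 = B 0 1) (h₁₀ : A 1 0 = B 1 0)
    (h₁₁ : A 1 1 = B 1 1) : A = B := by
  refine Matrix.ext fun i j => ?_
  fin_cases i <;> fin_cases j <;> assumption

/-- The element of `𝔭` with vertical part `b j + c k` (upper left entry) and horizontal part `q`
(lower left entry). These coordinates are not the orthonormal ones. -/
def mk (b c : ℝ) (q : Quaternion ℝ) : Mq := !![quat 0 0 b c, -star q; q, 0]

/-- The diagonal matrix `diag(α i, β)`; it lies in `𝔨` when `β` is purely imaginary. -/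
def kmk (α : ℝ) (β : Quaternion ℝ) : Mq := !![quat 0 α 0 0, 0; 0, β]

lemma mk_add (b c b' c' : ℝ) (q q' : Quaternion ℝ) :
    mk b c q + mk b' c' q' = mk (b + b') (c + c') (q + q') := by
  refine Mq_ext ?_ ?_ ?_ ?_ <;> apply Quaternion.ext <;> simp [mk] <;> ring

lemma mk_sub (b c b' c' : ℝ) (q q' : Quaternion ℝ) :
    mk b c q - mk b' c' q' = mk (b - b') (c - c') (q - q') := by
  refine Mq_ext ?_ ?_ ?_ ?_ <;> apply Quaternion.ext <;> simp [mk] <;> ring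

lemma smul_mk (t b c : ℝ) (q : Quaternion ℝ) :
    t • mk b c q = mk (t * b) (t * c) (t • q) := by
  refine Mq_ext ?_ ?_ ?_ ?_ <;> apply Quaternion.ext <;> simp [mk]

lemma e1_eq : e1 = mk (Real.sqrt 2)⁻¹ 0 0 := by
  refine Mq_ext ?_ ?_ ?_ ?_ <;> apply Quaternion.ext <;> simp [mk, e1, qj_eq]

lemma e2_eq : e2 = mk 0 (Real.sqrt 2)⁻¹ 0 := by
  refine Mq_ext ?_ ?_ ?_ ?_ <;> apply Quaternion.ext <;> simp [mk, e2, qk_eq]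

lemma e3_eq : e3 = mk 0 0 (quat 2⁻¹ 0 0 0) := by
  refine Mq_ext ?_ ?_ ?_ ?_ <;> apply Quaternion.ext <;> simp [mk, e3]

lemma e4_eq : e4 = mk 0 0 (quat 0 2⁻¹ 0 0) := by
  refine Mq_ext ?_ ?_ ?_ ?_ <;> apply Quaternion.ext <;> simp [mk, e4, qi_eq]

lemma e5_eq : e5 = mk 0 0 (quat 0 0 2⁻¹ 0) := by
  refine Mq_ext ?_ ?_ ?_ ?_ <;> apply Quaternion.ext <;> simp [mk, e5, qj_eq]

lemma e6_eq : e6 = mk 0 0 (quat 0 0 0 2⁻¹) := by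
  refine Mq_ext ?_ ?_ ?_ ?_ <;> apply Quaternion.ext <;> simp [mk, e6, qk_eq]

lemma mem_p1_iff (Y : Mq) : Y ∈ p1 ↔ ∃ b c, Y = mk b c 0 := by
  have h2 : Real.sqrt 2 ≠ 0 := by positivity
  rw [p1, e1_eq, e2_eq, Submodule.mem_span_pair]
  constructor
  · rintro ⟨s, t, rfl⟩
    exact ⟨_, _, by simp only [smul_mk, mk_add, smul_zero, add_zero]; rfl⟩
  · rintro ⟨b, c, rfl⟩
    refine ⟨b * Real.sqrt 2, c * Real.sqrt 2, ?_⟩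
    simp [smul_mk, mk_add, h2]

lemma mem_p2_iff (Y : Mq) : Y ∈ p2 ↔ ∃ q, Y = mk 0 0 q := by
  rw [p2, e3_eq, e4_eq, e5_eq, e6_eq]
  simp only [Submodule.mem_span_insert, Submodule.mem_span_singleton]
  constructor
  · rintro ⟨s, _, ⟨t, _, ⟨u, _, ⟨w, rfl⟩, rfl⟩, rfl⟩, rfl⟩
    exact ⟨_, by simp only [smul_mk, mk_add, mul_zero, add_zero]; rfl⟩
  · rintro ⟨q, rfl⟩
    refine ⟨q.re * 2, _, ⟨q.imI * 2, _, ⟨q.imJ * 2, _, ⟨q.imK * 2, rfl⟩, rfl⟩, rfl⟩, ?_⟩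
    simp only [smul_mk, mk_add, mul_zero, add_zero]
    congr 1
    apply Quaternion.ext <;> simp

lemma pAlg_eq : pAlg = p1 ⊔ p2 := by
  rw [pAlg, p1, p2, ← Submodule.span_union]
  congr 1
  ext; simp; tauto

lemma mem_pAlg_iff (Y : Mq) : Y ∈ pAlg ↔ ∃ b c q, Y = mk b c q := by
  simp only [pAlg_eq, Submodule.mem_sup, mem_p1_iff, mem_p2_iff]
  constructor
  · rintro ⟨_, ⟨b, c, rfl⟩, _, ⟨q, rfl⟩, rfl⟩
    exact ⟨b, c, q, by simp [mk_add]⟩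
  · rintro ⟨b, c, q, rfl⟩
    exact ⟨_, ⟨b, c, rfl⟩, _, ⟨q, rfl⟩, by simp [mk_add]⟩

lemma mem_kAlg_iff (Z : Mq) : Z ∈ kAlg ↔ ∃ α β, β.re = 0 ∧ Z = kmk α β := by
  rw [kAlg]
  simp only [Submodule.mem_span_insert, Submodule.mem_span_singleton]
  constructor
  · rintro ⟨s, _, ⟨t, _, ⟨u, _, ⟨w, rfl⟩, rfl⟩, rfl⟩, rfl⟩
    refine ⟨s, quat 0 t u w, rfl, ?_⟩
    refine Mq_ext ?_ ?_ ?_ ?_ <;> apply Quaternion.ext <;> simp [kmk, qi_eq, qj_eq, qk_eq]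
  · rintro ⟨α, β, h, rfl⟩
    refine ⟨α, _, ⟨β.imI, _, ⟨β.imJ, _, ⟨β.imK, rfl⟩, rfl⟩, rfl⟩, ?_⟩
    refine Mq_ext ?_ ?_ ?_ ?_ <;> apply Quaternion.ext <;> simp [kmk, qi_eq, qj_eq, qk_eq, h]

lemma bracket_mk (b c b' c' : ℝ) (q r : Quaternion ℝ) :
    ⁅mk b c q, mk b' c' r⁆ =
      kmk (2 * (b * c' - c * b') + 2 * (star r * q).imI) (r * star q - q * star r) +
      mk (2 * (star r * q).imJ) (2 * (star r * q).imK)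
        (q * quat 0 0 b' c' - r * quat 0 0 b c) := by
  rw [Ring.lie_def]
  refine Mq_ext ?_ ?_ ?_ ?_ <;> apply Quaternion.ext <;>
    simp [kmk, mk] <;> ring

lemma bracket_kmk (α : ℝ) (β : Quaternion ℝ) (hβ : β.re = 0) (b c : ℝ) (q : Quaternion ℝ) :
    ⁅kmk α β, mk b c q⁆ =
      mk (-2 * α * c) (2 * α * b) (β * q - q * quat 0 α 0 0) := by
  rw [Ring.lie_def]
  refine Mq_ext ?_ ?_ ?_ ?_ <;> apply Quaternion.ext <;>
    simp [kmk, mk, hβ] <;> ring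

section Curvature

variable {πk πp : Mq → Mq}

/-- The decomposition `𝔤 = 𝔨 ⊕ 𝔭` is direct, so the projections are determined by `hdec`. -/
lemma proj_eq (hdec : ∀ Z ∈ gAlg, πk Z ∈ kAlg ∧ πp Z ∈ pAlg ∧ πk Z + πp Z = Z)
    (α : ℝ) (β : Quaternion ℝ) (hβ : β.re = 0) (b c : ℝ) (q : Quaternion ℝ) :
    πk (kmk α β + mk b c q) = kmk α β ∧ πp (kmk α β + mk b c q) = mk b c q := by
  have hZ : kmk α β + mk b c q ∈ gAlg :=
    Submodule.add_mem_sup ((mem_kAlg_iff _).2 ⟨α, β, hβ, rfl⟩) ((mem_pAlg_iff _).2 ⟨b, c, q, rfl⟩)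
  obtain ⟨hk, hp, hs⟩ := hdec _ hZ
  obtain ⟨α', β', -, hk⟩ := (mem_kAlg_iff _).1 hk
  obtain ⟨b', c', q', hp⟩ := (mem_pAlg_iff _).1 hp
  rw [hk, hp] at hs ⊢
  have h00 := congrFun (congrFun hs 0) 0
  have h10 := congrFun (congrFun hs 1) 0
  have h11 := congrFun (congrFun hs 1) 1
  simp [kmk, mk] at h10 h11
  have hI := congrArg QuaternionAlgebra.imI h00
  have hJ := congrArg QuaternionAlgebra.imJ h00
  have hK := congrArg QuaternionAlgebra.imK h00
  simp [kmk, mk] at hI hJ hK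
  subst h10 h11 hI hJ hK
  exact ⟨rfl, rfl⟩

lemma re_sub_star (q r : Quaternion ℝ) : (r * star q - q * star r).re = 0 := by
  simp; ring

lemma πk_bracket (hdec : ∀ Z ∈ gAlg, πk Z ∈ kAlg ∧ πp Z ∈ pAlg ∧ πk Z + πp Z = Z)
    (b c b' c' : ℝ) (q r : Quaternion ℝ) :
    πk ⁅mk b c q, mk b' c' r⁆ =
      kmk (2 * (b * c' - c * b') + 2 * (star r * q).imI) (r * star q - q * star r) := by
  rw [bracket_mk, (proj_eq hdec _ _ (re_sub_star q r) _ _ _).1]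

lemma πp_bracket (hdec : ∀ Z ∈ gAlg, πk Z ∈ kAlg ∧ πp Z ∈ pAlg ∧ πk Z + πp Z = Z)
    (b c b' c' : ℝ) (q r : Quaternion ℝ) :
    πp ⁅mk b c q, mk b' c' r⁆ =
      mk (2 * (star r * q).imJ) (2 * (star r * q).imK)
        (q * quat 0 0 b' c' - r * quat 0 0 b c) := by
  rw [bracket_mk, (proj_eq hdec _ _ (re_sub_star q r) _ _ _).2]

lemma Dmap_mk (hdec : ∀ Z ∈ gAlg, πk Z ∈ kAlg ∧ πp Z ∈ pAlg ∧ πk Z + πp Z = Z)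
    (b c b' c' : ℝ) (q r : Quaternion ℝ) :
    Dmap πp (mk b c q) (mk b' c' r) =
      mk (star r * q).imJ (star r * q).imK
        ((2 : ℝ)⁻¹ • (q * quat 0 0 b' c' - r * quat 0 0 b c)) := by
  rw [Dmap, πp_bracket hdec, smul_mk]
  simp

/-- The operator `Y ↦ R(X,Y)X` for `X = (b, c, 0)` vertical. With `N = b² + c²`, it is `0`
on `X`, `-4N` on the orthogonal direction in `𝔭₁`, and `-N/4` on `𝔭₂`. -/
lemma Rmap_vertical (hdec : ∀ Z ∈ gAlg, πk Z ∈ kAlg ∧ πp Z ∈ pAlg ∧ πk Z + πp Z = Z)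
    (b c b' c' : ℝ) (r : Quaternion ℝ) :
    Rmap πk πp (mk b c 0) (mk b' c' r) (mk b c 0) =
      mk (4 * (b * c' - c * b') * c) (-4 * (b * c' - c * b') * b)
        ((-(b ^ 2 + c ^ 2) / 4) • r) := by
  rw [Rmap]
  simp only [Dmap_mk hdec, πp_bracket hdec, πk_bracket hdec, bracket_kmk _ _ (re_sub_star _ _),
    mk_sub]
  congr 1
  · simp [-mul_eq_mul_right_iff]; ring
  · simp [-mul_eq_mul_right_iff]; ring
  · apply Quaternion.ext <;> simp <;> ring

/-- The operator `Y ↦ R(X,Y)X` for `X = (0, 0, q)` horizontal, on `Y` with horizontal part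
`q s`: it is diagonal in the components of `s`. -/
lemma Rmap_horizontal (hdec : ∀ Z ∈ gAlg, πk Z ∈ kAlg ∧ πp Z ∈ pAlg ∧ πk Z + πp Z = Z)
    (b c : ℝ) (q : Quaternion ℝ) (s₀ s₁ s₂ s₃ : ℝ) (N : ℝ)
    (hN : N = q.re ^ 2 + q.imI ^ 2 + q.imJ ^ 2 + q.imK ^ 2) :
    Rmap πk πp (mk 0 0 q) (mk b c (q * quat s₀ s₁ s₂ s₃)) (mk 0 0 q) =
      mk (-(N / 2) * b) (-(N / 2) * c)
        (q * quat 0 (-(4 * N) * s₁) (-(5 / 2 * N) * s₂) (-(5 / 2 * N) * s₃)) := by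
  subst hN
  rw [Rmap]
  simp only [Dmap_mk hdec, πp_bracket hdec, πk_bracket hdec, bracket_kmk _ _ (re_sub_star _ _),
    mk_sub]
  congr 1
  · simp; ring
  · simp; ring
  · apply Quaternion.ext <;> simp <;> ring

end Curvature

/-- A subspace of `𝔭` stable under the projection onto `𝔭₂` is the sum of its intersections
with `𝔭₁` and `𝔭₂`. -/
lemma split_of_horizontal (v : Submodule ℝ Mq) (hvp : v ≤ pAlg)
    (h : ∀ b c q, mk b c q ∈ v → mk 0 0 q ∈ v) : v = (v ⊓ p1) ⊔ (v ⊓ p2) := by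
  refine le_antisymm (fun Y hY => ?_) (sup_le inf_le_left inf_le_left)
  obtain ⟨b, c, q, rfl⟩ := (mem_pAlg_iff Y).1 (hvp hY)
  have h2 := h b c q hY
  have h1 : mk b c 0 ∈ v := by
    have := v.sub_mem hY h2
    simpa [mk_sub] using this
  have hsum : mk b c q = mk b c 0 + mk 0 0 q := by simp [mk_add]
  rw [hsum]
  exact Submodule.add_mem_sup ⟨h1, (mem_p1_iff _).2 ⟨b, c, rfl⟩⟩ ⟨h2, (mem_p2_iff _).2 ⟨q, rfl⟩⟩

lemma mk_zero : mk 0 0 0 = 0 := by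
  simpa using mk_sub 0 0 0 0 0 0 |>.symm

end CP3

open CP3

/-- If a subspace `𝔳 ⊆ 𝔭` is curvature-invariant and contains
a nonzero vector of `𝔭₁` or of `𝔭₂`, then `𝔳 = (𝔳 ∩ 𝔭₁) ⊕ (𝔳 ∩ 𝔭₂)`
(it is well-positioned for the twistor fibration of nearly Kähler `ℂP³`). -/
theorem wellPositioned_of_curvature_invariant_CP3
    (πk πp : Mq → Mq)
    (hdec : ∀ Z ∈ gAlg, πk Z ∈ kAlg ∧ πp Z ∈ pAlg ∧ πk Z + πp Z = Z)
    (v : Submodule ℝ Mq) (hvp : v ≤ pAlg)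
    (hR : ∀ X ∈ v, ∀ Y ∈ v, ∀ Z ∈ v, Rmap πk πp X Y Z ∈ v)
    (hvec : (∃ x ∈ v, x ≠ 0 ∧ x ∈ p1) ∨ (∃ x ∈ v, x ≠ 0 ∧ x ∈ p2)) :
    v = (v ⊓ p1) ⊔ (v ⊓ p2) := by
  apply split_of_horizontal v hvp
  intro b c r hY
  rcases hvec with ⟨x, hxv, hx0, hx⟩ | ⟨x, hxv, hx0, hx⟩
  · obtain ⟨β, γ, rfl⟩ := (mem_p1_iff x).1 hx
    have hN : β ^ 2 + γ ^ 2 ≠ 0 := by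
      intro h
      have hβ : β = 0 := by nlinarith [sq_nonneg β, sq_nonneg γ]
      have hγ : γ = 0 := by nlinarith [sq_nonneg β, sq_nonneg γ]
      exact hx0 (by rw [hβ, hγ, mk_zero])
    have J1 := hR _ hxv _ hY _ hxv
    rw [Rmap_vertical hdec] at J1
    have J2 := hR _ hxv _ J1 _ hxv
    rw [Rmap_vertical hdec] at J2
    -- `J² + 4N J` vanishes on `𝔭₁` and is `N²/16 - N² = -15 N²/16` on `𝔭₂`.
    have key := v.smul_mem (-(16 / 15) * ((β ^ 2 + γ ^ 2) ^ 2)⁻¹)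
      (v.add_mem J2 (v.smul_mem (4 * (β ^ 2 + γ ^ 2)) J1))
    simp only [smul_mk, mk_add] at key
    convert key using 1
    congr 1
    · ring
    · ring
    · simp only [smul_smul, ← add_smul]
      rw [eq_comm]
      convert one_smul ℝ r using 2
      field_simp
      ring
  · obtain ⟨q, rfl⟩ := (mem_p2_iff x).1 hx
    have hq : q ≠ 0 := by
      rintro rfl
      exact hx0 mk_zero
    obtain ⟨N, hN⟩ : ∃ N, N = q.re ^ 2 + q.imI ^ 2 + q.imJ ^ 2 + q.imK ^ 2 := ⟨_, rfl⟩
    have hN0 : N ≠ 0 := by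
      rw [hN, ← Quaternion.normSq_def']
      exact Quaternion.normSq_ne_zero.2 hq
    obtain ⟨s₀, s₁, s₂, s₃, rfl⟩ : ∃ s₀ s₁ s₂ s₃, r = q * quat s₀ s₁ s₂ s₃ :=
      ⟨_, _, _, _, by rw [quat_eta (q⁻¹ * r), mul_inv_cancel_left₀ hq]⟩
    have J1 := hR _ hxv _ hY _ hxv
    rw [Rmap_horizontal hdec _ _ _ _ _ _ _ N hN] at J1
    have J2 := hR _ hxv _ J1 _ hxv
    rw [Rmap_horizontal hdec _ _ _ _ _ _ _ N hN] at J2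
    have J3 := hR _ hxv _ J2 _ hxv
    rw [Rmap_horizontal hdec _ _ _ _ _ _ _ N hN] at J3
    -- `J (J + 4N) (J + 5N/2) = J³ + 13N/2 J² + 10N² J` vanishes on `𝔭₂` and is
    -- `-(N/2) (7N/2) (2N) = -7 N³/2` on `𝔭₁`, so a multiple of it cancels the part of `Y` in `𝔭₁`.
    have key := v.add_mem hY (v.smul_mem (2 / 7 * (N ^ 3)⁻¹)
      (v.add_mem J3 (v.add_mem (v.smul_mem (13 / 2 * N) J2) (v.smul_mem (10 * N ^ 2) J1))))
    simp only [smul_mk, mk_add] at key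
    convert key using 1
    congr 1
    · field_simp
      ring
    · field_simp
      ring
    · apply Quaternion.ext <;> simp <;> ring

end
end

section
/- There is no 4-dimensional subspace 𝔳 of 𝔭 such that R(X,Y)Z ∈ 𝔳 and (∇_V R)(X,Y,Z) ∈ 𝔳 for all X, Y, Z, V ∈ 𝔳. (Algebraic core of: the homogeneous nearly Kähler ℂP³ admits no totally geodesic submanifolds of dimension four.) -/
/- Setup: the homogeneous nearly Kähler `ℂP³ = Sp(2)/(U(1)×Sp(1))`.
`𝔤 = 𝔰𝔭(2) ⊆ Mat₂(ℍ)`, `𝔨 ≅ 𝔲(1) ⊕ 𝔰𝔭(1)` the diagonal subalgebra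
`{diag(a i, q)}`, and `𝔭` its orthogonal complement, with orthonormal basis
`e₁,…,e₆` as in the paper. -/

noncomputable section
open Matrix

/-- covariant derivative of the curvature,
`(∇_V R)(X,Y,Z) = D_V(R(X,Y)Z) − R(D_V X,Y)Z − R(X,D_V Y)Z − R(X,Y)(D_V Z)`. -/
def nablaR (πk πp : Mq → Mq) (V X Y Z : Mq) : Mq :=
  Dmap πp V (Rmap πk πp X Y Z) - Rmap πk πp (Dmap πp V X) Y Z
    - Rmap πk πp X (Dmap πp V Y) Z - Rmap πk πp X Y (Dmap πp V Z)

open scoped Quaternion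

/-!
The obstruction is a parity argument with the Jacobi operator of a horizontal vector in `v`.

Since `dim v = 4` and the vertical part of `𝔭` is two-dimensional, `v` contains a horizontal vector,
which up to scale is a unit quaternion `q` (`exists_frame`). Conjugation by `diag(1, q)` preserves
`𝔨`, `𝔭` and the bracket, hence also `R` and `∇R`, and moves the horizontal vector `1` to `q`. The
maps `πk`, `πp` enter only through their values on `𝔤`, which are forced because `𝔨 ∩ 𝔭 = 0`
(`proj_eq`). So everything reduces to a subspace `u` of `ℝ⁶` containing the vector `1`, with `R` and
`∇R` given by the explicit formulas `rCo` and `nCo` (`frame_R`, `frame_nabla`).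

There, `R(·, 1)1` has the eigenvalue `0` on the line of `1`, `4` on the line of `i`, `1/2` on the
vertical plane and `5/2` on the plane spanned by `j` and `k`. These are distinct, so `u` is the
direct sum of its intersections with the four eigenspaces. The operator `(∇_1 R)(·, 1, 1)`
interchanges the two planes, so the intersections of `u` with them have a common dimension `d`.

* If `i ∉ u`, then `dim u = 1 + 2d` is odd.
* If `i ∈ u`, then `R(1, i)` maps `u` to itself and rotates each plane by a right angle up to scale,
  so `d` is `0` or `2` and `dim u = 2 + 2d` is `2` or `6`.

In neither case is `dim u = 4` (`finrank_ne_four`).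
-/

/-! ### Coordinates on `𝔨` and `𝔭` -/

/-- The quaternion `a + b i + c j + d k`. -/
def quat (a b c d : ℝ) : Quaternion ℝ := ⟨a, b, c, d⟩

@[simp] theorem re_quat (a b c d : ℝ) : (quat a b c d).re = a := rfl
@[simp] theorem imI_quat (a b c d : ℝ) : (quat a b c d).imI = b := rfl
@[simp] theorem imJ_quat (a b c d : ℝ) : (quat a b c d).imJ = c := rfl
@[simp] theorem imK_quat (a b c d : ℝ) : (quat a b c d).imK = d := rfl

theorem qi_eq : qi = quat 0 1 0 0 := rfl
theorem qj_eq : qj = quat 0 0 1 0 := rfl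
theorem qk_eq : qk = quat 0 0 0 1 := rfl

/-- The element of `𝔭` with vertical part `x₀ j + x₁ k` and horizontal part the quaternion
`x₂ + x₃ i + x₄ j + x₅ k`; the basis used is orthogonal, not orthonormal, which avoids `√2`. -/
def pVec (x : Fin 6 → ℝ) : Mq :=
  !![quat 0 0 (x 0) (x 1), quat (-x 2) (x 3) (x 4) (x 5); quat (x 2) (x 3) (x 4) (x 5), 0]

/-- The element `diag(t₀ i, t₁ i + t₂ j + t₃ k)` of `𝔨`. -/
def kVec (t : Fin 4 → ℝ) : Mq :=
  !![quat 0 (t 0) 0 0, 0; 0, quat 0 (t 1) (t 2) (t 3)]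

/-- The `𝔭`-part of the bracket of two elements of `𝔭`, in coordinates. -/
def pBr (x y : Fin 6 → ℝ) : Fin 6 → ℝ :=
  ![-2 * (x 2 * y 4 - x 4 * y 2 - (x 5 * y 3 - x 3 * y 5)),
    -2 * (x 2 * y 5 - x 5 * y 2 - (x 3 * y 4 - x 4 * y 3)),
    (-x 4 * y 0 - x 5 * y 1) - (-y 4 * x 0 - y 5 * x 1),
    (x 4 * y 1 - x 5 * y 0) - (y 4 * x 1 - y 5 * x 0),
    (x 2 * y 0 - x 3 * y 1) - (y 2 * x 0 - y 3 * x 1),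
    (x 2 * y 1 + x 3 * y 0) - (y 2 * x 1 + y 3 * x 0)]

/-- The `𝔨`-part of the bracket of two elements of `𝔭`, in coordinates. -/
def kBr (x y : Fin 6 → ℝ) : Fin 4 → ℝ :=
  ![2 * (x 0 * y 1 - x 1 * y 0) - 2 * (x 2 * y 3 - x 3 * y 2 - (x 4 * y 5 - x 5 * y 4)),
    2 * (x 2 * y 3 - x 3 * y 2 + (x 4 * y 5 - x 5 * y 4)),
    2 * (x 2 * y 4 - x 4 * y 2 + (x 5 * y 3 - x 3 * y 5)),
    2 * (x 2 * y 5 - x 5 * y 2 + (x 3 * y 4 - x 4 * y 3))]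

/-- The isotropy action of `𝔨` on `𝔭`, in coordinates. -/
def kAct (t : Fin 4 → ℝ) (x : Fin 6 → ℝ) : Fin 6 → ℝ :=
  ![-2 * t 0 * x 1, 2 * t 0 * x 0,
    -t 1 * x 3 - t 2 * x 4 - t 3 * x 5 + x 3 * t 0,
    t 1 * x 2 + t 2 * x 5 - t 3 * x 4 - x 2 * t 0,
    t 2 * x 2 + t 3 * x 3 - t 1 * x 5 - x 5 * t 0,
    t 3 * x 2 + t 1 * x 4 - t 2 * x 3 + x 4 * t 0]

/-- The difference tensor `D` in coordinates. -/
def dCo (x y : Fin 6 → ℝ) : Fin 6 → ℝ := (2 : ℝ)⁻¹ • pBr x y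

/-- The curvature tensor `R` in coordinates. -/
def rCo (x y z : Fin 6 → ℝ) : Fin 6 → ℝ :=
  dCo x (dCo y z) - dCo y (dCo x z) - kAct (kBr x y) z - dCo (pBr x y) z

/-- The tensor `∇R` in coordinates. -/
def nCo (w x y z : Fin 6 → ℝ) : Fin 6 → ℝ :=
  dCo w (rCo x y z) - rCo (dCo w x) y z - rCo x (dCo w y) z - rCo x y (dCo w z)

theorem bracket_pVec (x y : Fin 6 → ℝ) : ⁅pVec x, pVec y⁆ = kVec (kBr x y) + pVec (pBr x y) := by
  rw [Ring.lie_def]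
  ext i j <;> fin_cases i <;> fin_cases j <;>
    simp [pVec, kVec, kBr, pBr] <;> ring

theorem bracket_kVec (t : Fin 4 → ℝ) (x : Fin 6 → ℝ) :
    ⁅kVec t, pVec x⁆ = pVec (kAct t x) := by
  rw [Ring.lie_def]
  ext i j <;> fin_cases i <;> fin_cases j <;>
    simp [pVec, kVec, kAct] <;> ring

/-- The coordinate parametrization of `𝔭` as a linear map. -/
def pLin : (Fin 6 → ℝ) →ₗ[ℝ] Mq where
  toFun := pVec
  map_add' x y := by
    ext i j <;> fin_cases i <;> fin_cases j <;> simp [pVec] <;> ring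
  map_smul' c x := by
    ext i j <;> fin_cases i <;> fin_cases j <;> simp [pVec]

theorem pVec_mem (x : Fin 6 → ℝ) : pVec x ∈ pAlg := by
  have h : pVec x = (x 0 * Real.sqrt 2) • e1 + (x 1 * Real.sqrt 2) • e2 + (2 * x 2) • e3
      + (2 * x 3) • e4 + (2 * x 4) • e5 + (2 * x 5) • e6 := by
    have h2 : Real.sqrt 2 ≠ 0 := by positivity
    ext i j <;> fin_cases i <;> fin_cases j <;>
      simp [pVec, e1, e2, e3, e4, e5, e6, qi_eq, qj_eq, qk_eq] <;> field_simp
  rw [h]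
  have hs : ∀ e ∈ ({e1, e2, e3, e4, e5, e6} : Set Mq), ∀ c : ℝ, c • e ∈ pAlg :=
    fun e he c => Submodule.smul_mem _ _ (Submodule.subset_span he)
  refine add_mem (add_mem (add_mem (add_mem (add_mem ?_ ?_) ?_) ?_) ?_) ?_ <;>
    exact hs _ (by simp) _

theorem kVec_mem (t : Fin 4 → ℝ) : kVec t ∈ kAlg := by
  have h : kVec t = t 0 • !![qi, 0; 0, 0] + t 1 • !![0, 0; 0, qi] + t 2 • !![0, 0; 0, qj]
      + t 3 • !![0, 0; 0, qk] := by
    ext i j <;> fin_cases i <;> fin_cases j <;> simp [kVec, qi_eq, qj_eq, qk_eq]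
  rw [h]
  refine add_mem (add_mem (add_mem ?_ ?_) ?_) ?_ <;>
    exact Submodule.smul_mem _ _ (Submodule.subset_span (by simp))

theorem exists_pVec {M : Mq} (hM : M ∈ pAlg) : ∃ x, M = pVec x := by
  have hle : pAlg ≤ LinearMap.range pLin := by
    refine Submodule.span_le.2 ?_
    rintro e (rfl | rfl | rfl | rfl | rfl | rfl)
    · refine ⟨![(Real.sqrt 2)⁻¹, 0, 0, 0, 0, 0], ?_⟩
      ext i j <;> fin_cases i <;> fin_cases j <;> simp [pLin, pVec, e1, qj_eq]
    · refine ⟨![0, (Real.sqrt 2)⁻¹, 0, 0, 0, 0], ?_⟩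
      ext i j <;> fin_cases i <;> fin_cases j <;> simp [pLin, pVec, e2, qk_eq]
    · refine ⟨![0, 0, 2⁻¹, 0, 0, 0], ?_⟩
      ext i j <;> fin_cases i <;> fin_cases j <;> simp [pLin, pVec, e3]
    · refine ⟨![0, 0, 0, 2⁻¹, 0, 0], ?_⟩
      ext i j <;> fin_cases i <;> fin_cases j <;> simp [pLin, pVec, e4, qi_eq]
    · refine ⟨![0, 0, 0, 0, 2⁻¹, 0], ?_⟩
      ext i j <;> fin_cases i <;> fin_cases j <;> simp [pLin, pVec, e5, qj_eq]
    · refine ⟨![0, 0, 0, 0, 0, 2⁻¹], ?_⟩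
      ext i j <;> fin_cases i <;> fin_cases j <;> simp [pLin, pVec, e6, qk_eq]
  obtain ⟨x, hx⟩ := hle hM
  exact ⟨x, hx.symm⟩

theorem kAlg_entries {M : Mq} (hM : M ∈ kAlg) :
    M 1 0 = 0 ∧ (M 0 0).imJ = 0 ∧ (M 0 0).imK = 0 := by
  induction hM using Submodule.span_induction with
  | mem x hx => rcases hx with rfl | rfl | rfl | rfl <;> simp [qi_eq]
  | zero => simp
  | add x y _ _ hx hy => simp [hx, hy]
  | smul c x _ hx => simp [hx]

/-- The subspaces `𝔨` and `𝔭` meet only in `0`, so `πk` and `πp` are determined on `𝔤`. -/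
theorem kAlg_inf_pAlg {M : Mq} (hk : M ∈ kAlg) (hp : M ∈ pAlg) : M = 0 := by
  obtain ⟨x, rfl⟩ := exists_pVec hp
  obtain ⟨h1, h2, h3⟩ := kAlg_entries hk
  have h1' := Quaternion.ext_iff.1 h1
  simp [pVec] at h1' h2 h3
  obtain ⟨a, b, c, d⟩ := h1'
  ext i j <;> fin_cases i <;> fin_cases j <;> simp [pVec, *]

theorem pLin_injective : Function.Injective pLin := by
  rw [injective_iff_map_eq_zero]
  intro x hx
  have h1 := Quaternion.ext_iff.1 (congrFun (congrFun hx 0) 0)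
  have h2 := Quaternion.ext_iff.1 (congrFun (congrFun hx 1) 0)
  simp [pLin, pVec] at h1 h2
  ext i
  fin_cases i <;> simp [*]

/-! ### Rotating a horizontal unit vector to the quaternion `1` -/

/-- Conjugation by `diag(1, q)`. For a unit quaternion `q` this is the adjoint action of an element
of the isotropy group, and it sends the horizontal vector `1` to `q`. -/
def conjQ (q : Quaternion ℝ) : Mq →ₗ[ℝ] Mq where
  toFun M := !![1, 0; 0, q] * M * !![1, 0; 0, star q]
  map_add' x y := by rw [mul_add, add_mul]
  map_smul' c x := by rw [Matrix.mul_smul, Matrix.smul_mul, RingHom.id_apply]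

theorem conjQ_apply (q : Quaternion ℝ) (M : Mq) :
    conjQ q M = !![1, 0; 0, q] * M * !![1, 0; 0, star q] := rfl

theorem conjQ_bracket {q : Quaternion ℝ} (hq : star q * q = 1) (M N : Mq) :
    ⁅conjQ q M, conjQ q N⁆ = conjQ q ⁅M, N⁆ := by
  have h : (!![1, 0; 0, star q] : Mq) * !![1, 0; 0, q] = 1 := by
    ext i j <;> fin_cases i <;> fin_cases j <;> simp [Matrix.mul_apply, hq]
  have key : ∀ A B : Mq, conjQ q A * conjQ q B = conjQ q (A * B) := by
    intro A B
    simp only [conjQ_apply, mul_assoc]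
    rw [← mul_assoc !![1, 0; 0, star q] !![1, 0; 0, q], h, one_mul]
  rw [Ring.lie_def, Ring.lie_def, key, key, map_sub]

theorem conjQ_injective {q : Quaternion ℝ} (hq : star q * q = 1) :
    Function.Injective (conjQ q) := by
  have h : (!![1, 0; 0, star q] : Mq) * !![1, 0; 0, q] = 1 := by
    ext i j <;> fin_cases i <;> fin_cases j <;> simp [Matrix.mul_apply, hq]
  intro A B hAB
  have h2 := congrArg (fun M : Mq => !![1, 0; 0, star q] * M * !![1, 0; 0, q]) hAB
  have key : ∀ A : Mq, !![1, 0; 0, star q] * conjQ q A * !![1, 0; 0, q] = A := by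
    intro A
    simp only [conjQ_apply, mul_assoc]
    rw [h, mul_one, ← mul_assoc, h, one_mul]
  simpa only [key] using h2

theorem conjQ_pVec_mem (q : Quaternion ℝ) (x : Fin 6 → ℝ) : conjQ q (pVec x) ∈ pAlg := by
  set c : Quaternion ℝ := q * quat (x 2) (x 3) (x 4) (x 5) with hc
  have : conjQ q (pVec x) = pVec ![x 0, x 1, c.re, c.imI, c.imJ, c.imK] := by
    ext i j <;> fin_cases i <;> fin_cases j <;>
      simp [conjQ_apply, pVec, hc, Matrix.mul_apply, Fin.sum_univ_two] <;> ring
  rw [this]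
  exact pVec_mem _

theorem conjQ_kVec_mem (q : Quaternion ℝ) (t : Fin 4 → ℝ) : conjQ q (kVec t) ∈ kAlg := by
  set c : Quaternion ℝ := q * quat 0 (t 1) (t 2) (t 3) * star q with hc
  have : conjQ q (kVec t) = kVec ![t 0, c.imI, c.imJ, c.imK] := by
    ext i j <;> fin_cases i <;> fin_cases j <;>
      simp [conjQ_apply, kVec, hc, Matrix.mul_apply, Fin.sum_univ_two] <;> ring
  rw [this]
  exact kVec_mem _

/-- The parametrization of `𝔭` adapted to the horizontal vector `q`. -/
def frame (q : Quaternion ℝ) : (Fin 6 → ℝ) →ₗ[ℝ] Mq := conjQ q ∘ₗ pLin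

theorem frame_apply (q : Quaternion ℝ) (x : Fin 6 → ℝ) : frame q x = conjQ q (pVec x) := rfl

theorem frame_range {q : Quaternion ℝ} (hq : q * star q = 1) {M : Mq} (hM : M ∈ pAlg) :
    ∃ x, frame q x = M := by
  obtain ⟨y, rfl⟩ := exists_pVec hM
  have hinv : conjQ q (conjQ (star q) (pVec y)) = pVec y := by
    have h : (!![1, 0; 0, q] : Mq) * !![1, 0; 0, star q] = 1 := by
      ext i j <;> fin_cases i <;> fin_cases j <;> simp [Matrix.mul_apply, hq]
    simp only [conjQ_apply, mul_assoc, star_star]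
    rw [h, mul_one, ← mul_assoc, h, one_mul]
  obtain ⟨x, hx⟩ := exists_pVec (conjQ_pVec_mem (star q) y)
  exact ⟨x, by rw [frame_apply, ← hx, hinv]⟩

/-- On `𝔤` the maps `πk`, `πp` are determined by the decomposition, since `𝔨 ∩ 𝔭 = 0`. -/
theorem proj_eq {πk πp : Mq → Mq}
    (hdec : ∀ Z ∈ gAlg, πk Z ∈ kAlg ∧ πp Z ∈ pAlg ∧ πk Z + πp Z = Z)
    {A B : Mq} (hA : A ∈ kAlg) (hB : B ∈ pAlg) : πk (A + B) = A ∧ πp (A + B) = B := by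
  obtain ⟨h1, h2, h3⟩ := hdec (A + B) (Submodule.add_mem_sup hA hB)
  have h4 : πk (A + B) - A = B - πp (A + B) := by
    rw [sub_eq_sub_iff_add_eq_add, h3, add_comm]
  have h5 : πk (A + B) - A = 0 :=
    kAlg_inf_pAlg (sub_mem h1 hA) (h4 ▸ sub_mem hB h2)
  exact ⟨sub_eq_zero.1 h5, (sub_eq_zero.1 (h4 ▸ h5)).symm⟩

theorem frame_proj {πk πp : Mq → Mq}
    (hdec : ∀ Z ∈ gAlg, πk Z ∈ kAlg ∧ πp Z ∈ pAlg ∧ πk Z + πp Z = Z)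
    {q : Quaternion ℝ} (hq : star q * q = 1) (x y : Fin 6 → ℝ) :
    πk ⁅frame q x, frame q y⁆ = conjQ q (kVec (kBr x y)) ∧
      πp ⁅frame q x, frame q y⁆ = frame q (pBr x y) := by
  rw [frame_apply, frame_apply, conjQ_bracket hq, bracket_pVec, map_add]
  exact proj_eq hdec (conjQ_kVec_mem _ _) (conjQ_pVec_mem _ _)

theorem frame_D {πk πp : Mq → Mq}
    (hdec : ∀ Z ∈ gAlg, πk Z ∈ kAlg ∧ πp Z ∈ pAlg ∧ πk Z + πp Z = Z)
    {q : Quaternion ℝ} (hq : star q * q = 1) (x y : Fin 6 → ℝ) :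
    Dmap πp (frame q x) (frame q y) = frame q (dCo x y) := by
  rw [Dmap, (frame_proj hdec hq x y).2, dCo, map_smul]

theorem frame_R {πk πp : Mq → Mq}
    (hdec : ∀ Z ∈ gAlg, πk Z ∈ kAlg ∧ πp Z ∈ pAlg ∧ πk Z + πp Z = Z)
    {q : Quaternion ℝ} (hq : star q * q = 1) (x y z : Fin 6 → ℝ) :
    Rmap πk πp (frame q x) (frame q y) (frame q z) = frame q (rCo x y z) := by
  have h : ⁅conjQ q (kVec (kBr x y)), frame q z⁆ = frame q (kAct (kBr x y) z) := by
    rw [frame_apply, conjQ_bracket hq, bracket_kVec, frame_apply]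
  simp only [Rmap, frame_D hdec hq, (frame_proj hdec hq x y).2, (frame_proj hdec hq x y).1, h,
    rCo, map_sub]

theorem frame_nabla {πk πp : Mq → Mq}
    (hdec : ∀ Z ∈ gAlg, πk Z ∈ kAlg ∧ πp Z ∈ pAlg ∧ πk Z + πp Z = Z)
    {q : Quaternion ℝ} (hq : star q * q = 1) (w x y z : Fin 6 → ℝ) :
    nablaR πk πp (frame q w) (frame q x) (frame q y) (frame q z) = frame q (nCo w x y z) := by
  simp only [nablaR, frame_D hdec hq, frame_R hdec hq, nCo, map_sub]

/-! ### Invariant subspaces in coordinates -/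

/-- The horizontal vector `1` in coordinates. -/
def E3 : Fin 6 → ℝ := ![0, 0, 1, 0, 0, 0]

/-- The horizontal vector `i` in coordinates. -/
def E4 : Fin 6 → ℝ := ![0, 0, 0, 1, 0, 0]

/-- The Jacobi operator of the horizontal vector `1` is diagonal, with eigenvalues `1/2`
(vertical vectors), `0` (the vector itself), `4` (the vector `i`) and `5/2` (`j` and `k`). -/
theorem jacobi_E3 (x : Fin 6 → ℝ) :
    rCo x E3 E3 = ![x 0 / 2, x 1 / 2, 0, 4 * x 3, 5 / 2 * x 4, 5 / 2 * x 5] := by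
  ext i
  fin_cases i <;> simp [rCo, dCo, pBr, kBr, kAct, E3] <;> ring

/-- The derivative of the Jacobi operator interchanges the eigenplanes for `1/2` and `5/2`. -/
theorem nabla_jacobi_E3 (x : Fin 6 → ℝ) :
    nCo E3 x E3 E3 = ![-2 * x 4, -2 * x 5, 0, 0, -x 0, -x 1] := by
  ext i
  fin_cases i <;> simp [nCo, rCo, dCo, pBr, kBr, kAct, E3] <;> ring

/-- The curvature operator `R(1, i)` acts on both eigenplanes as a nonzero multiple of the rotation
by a right angle. -/
theorem curv_E3_E4 (x : Fin 6 → ℝ) :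
    rCo E3 E4 x = ![-3 * x 1, 3 * x 0, 4 * x 3, -4 * x 2, -x 5, x 4] := by
  ext i
  fin_cases i <;> simp [rCo, dCo, pBr, kBr, kAct, E3, E4] <;> ring

theorem finrank_le_of_combination {n : ℕ} {u : Submodule ℝ (Fin 6 → ℝ)} (b : Fin n → Fin 6 → ℝ)
    (h : ∀ x ∈ u, ∃ c : Fin n → ℝ, ∑ i, c i • b i = x) : Module.finrank ℝ u ≤ n := by
  have hle : u ≤ Submodule.span ℝ (Set.range b) := fun x hx =>
    Submodule.mem_span_range_iff_exists_fun ℝ |>.2 (h x hx)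
  calc Module.finrank ℝ u ≤ Module.finrank ℝ (Submodule.span ℝ (Set.range b)) :=
        Submodule.finrank_mono hle
    _ ≤ n := by simpa [Set.finrank] using finrank_range_le_card (R := ℝ) b

/-- An invariant subspace containing the horizontal vector `1` has dimension `2` or `6` if it
contains `i`, and `1`, `3` or `5` otherwise: its intersections with the `0, 1` plane and the
`4, 5` plane are interchanged by `∇R`, hence have equal dimension, and they are stable under a
rotation by a right angle if `i` is present. -/
theorem finrank_ne_four {u : Submodule ℝ (Fin 6 → ℝ)} (h3 : E3 ∈ u)
    (hR : ∀ x ∈ u, ∀ y ∈ u, ∀ z ∈ u, rCo x y z ∈ u)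
    (hN : ∀ w ∈ u, ∀ x ∈ u, ∀ y ∈ u, ∀ z ∈ u, nCo w x y z ∈ u) :
    Module.finrank ℝ u ≠ 4 := by
  have hJ : ∀ x ∈ u, ![x 0 / 2, x 1 / 2, 0, 4 * x 3, 5 / 2 * x 4, 5 / 2 * x 5] ∈ u :=
    fun x hx => jacobi_E3 x ▸ hR x hx _ h3 _ h3
  have hNJ : ∀ x ∈ u, ![-2 * x 4, -2 * x 5, 0, 0, -x 0, -x 1] ∈ u :=
    fun x hx => nabla_jacobi_E3 x ▸ hN _ h3 x hx _ h3 _ h3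
  -- The eigenvalues `0, 1/2, 4, 5/2` are distinct, so Lagrange interpolation in the Jacobi
  -- operator gives the three spectral projections.
  have hV : ∀ x ∈ u, ![x 0, x 1, 0, 0, 0, 0] ∈ u := by
    intro x hx
    have h1 := hJ x hx
    have h2 := hJ _ h1
    have h3 := hJ _ h2
    convert u.smul_mem (2 / 7) (u.add_mem (u.add_mem h3 (u.smul_mem (-13 / 2) h2))
      (u.smul_mem 10 h1)) using 1
    ext i
    fin_cases i <;> simp <;> ring
  have h4 : ∀ x ∈ u, ![0, 0, 0, x 3, 0, 0] ∈ u := by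
    intro x hx
    have h1 := hJ x hx
    have h2 := hJ _ h1
    have h3 := hJ _ h2
    convert u.smul_mem (1 / 21) (u.add_mem (u.add_mem h3 (u.smul_mem (-3) h2))
      (u.smul_mem (5 / 4) h1)) using 1
    ext i
    fin_cases i <;> simp <;> ring
  have hH : ∀ x ∈ u, ![0, 0, 0, 0, x 4, x 5] ∈ u := by
    intro x hx
    have h1 := hJ x hx
    have h2 := hJ _ h1
    have h3 := hJ _ h2
    convert u.smul_mem (-2 / 15) (u.add_mem (u.add_mem h3 (u.smul_mem (-9 / 2) h2))
      (u.smul_mem 2 h1)) using 1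
    ext i
    fin_cases i <;> simp <;> ring
  have hHV : ∀ x ∈ u, ![x 4, x 5, 0, 0, 0, 0] ∈ u := by
    intro x hx
    convert u.smul_mem (-1 / 2) (hNJ _ (hH x hx)) using 1
    ext i
    fin_cases i <;> simp <;> ring
  have hVH : ∀ x ∈ u, ![0, 0, 0, 0, x 0, x 1] ∈ u := by
    intro x hx
    convert u.smul_mem (-1) (hNJ _ (hV x hx)) using 1
    ext i
    fin_cases i <;> simp
  -- If the `j, k` parts of two vectors of `u` are independent, then `u` contains
  -- all vectors without `i`-component.
  have hfull : ∀ x ∈ u, ∀ y ∈ u, x 4 * y 5 - x 5 * y 4 ≠ 0 → ∀ z : Fin 6 → ℝ, z 3 = 0 → z ∈ u := by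
    intro x hx y hy hd z hz
    obtain ⟨r, hr⟩ : ∃ r, r * (x 4 * y 5 - x 5 * y 4) = 1 := ⟨_, inv_mul_cancel₀ hd⟩
    -- Cramer's rule
    have e : z = z 2 • E3
        + ((r * (z 0 * y 5 - z 1 * y 4)) • ![x 4, x 5, 0, 0, 0, 0]
          + (r * (x 4 * z 1 - x 5 * z 0)) • ![y 4, y 5, 0, 0, 0, 0])
        + ((r * (z 4 * y 5 - z 5 * y 4)) • ![0, 0, 0, 0, x 4, x 5]
          + (r * (x 4 * z 5 - x 5 * z 4)) • ![0, 0, 0, 0, y 4, y 5]) := by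
      ext i
      fin_cases i <;> simp [E3, hz]
      · linear_combination -z 0 * hr
      · linear_combination -z 1 * hr
      · linear_combination -z 4 * hr
      · linear_combination -z 5 * hr
    rw [e]
    exact add_mem (add_mem (u.smul_mem _ h3)
      (add_mem (u.smul_mem _ (hHV x hx)) (u.smul_mem _ (hHV y hy))))
      (add_mem (u.smul_mem _ (hH x hx)) (u.smul_mem _ (hH y hy)))
  intro hfin
  by_cases hE4 : E4 ∈ u
  · by_cases hx : ∃ x ∈ u, x 4 ≠ 0 ∨ x 5 ≠ 0
    · obtain ⟨x, hx, hne⟩ := hx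
      -- The rotated vector has `j, k` part `(-x 5, x 4)`, independent of `(x 4, x 5)`.
      have hrot := curv_E3_E4 x ▸ hR _ h3 _ hE4 x hx
      have hd : x 4 * x 4 + x 5 * x 5 ≠ 0 := by
        rcases hne with h | h
        · nlinarith [mul_self_pos.2 h, mul_self_nonneg (x 5)]
        · nlinarith [mul_self_pos.2 h, mul_self_nonneg (x 4)]
      have htop : u = ⊤ := by
        rw [eq_top_iff]
        intro z _
        have hz := hfull x hx _ hrot (by simpa using hd) (z - z 3 • E4) (by simp [E4])
        simpa using add_mem hz (u.smul_mem (z 3) hE4)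
      rw [htop] at hfin
      simp at hfin
    · push Not at hx
      have : Module.finrank ℝ u ≤ 2 := by
        refine finrank_le_of_combination ![E3, E4] fun x hxu => ⟨![x 2, x 3], ?_⟩
        have h01 := hx _ (hVH x hxu)
        have h45 := hx x hxu
        simp at h01
        ext i
        fin_cases i <;> simp [E3, E4, h01, h45]
      omega
  · have hx3 : ∀ x ∈ u, x 3 = 0 := by
      intro x hx
      by_contra h
      refine hE4 ?_
      convert u.smul_mem (x 3)⁻¹ (h4 x hx) using 1
      ext i
      fin_cases i <;> simp [E4, h]
    by_cases hind : ∃ x ∈ u, ∃ y ∈ u, x 4 * y 5 - x 5 * y 4 ≠ 0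
    · obtain ⟨x, hx, y, hy, hd⟩ := hind
      have hker : u = LinearMap.ker (LinearMap.proj 3 : (Fin 6 → ℝ) →ₗ[ℝ] ℝ) :=
        le_antisymm (fun z hz => hx3 z hz) (fun z hz => hfull x hx y hy hd z hz)
      have hne : (LinearMap.proj 3 : (Fin 6 → ℝ) →ₗ[ℝ] ℝ) ≠ 0 := by
        intro h
        simpa [E4] using LinearMap.congr_fun h E4
      have := Module.Dual.finrank_ker_add_one_of_ne_zero (K := ℝ) hne
      rw [← hker, hfin] at this
      simp at this
    · push Not at hind
      by_cases hx : ∃ w ∈ u, w 4 ≠ 0 ∨ w 5 ≠ 0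
      · obtain ⟨w, hw, hne⟩ := hx
        have hd : w 4 * w 4 + w 5 * w 5 ≠ 0 := by
          rcases hne with h | h
          · nlinarith [mul_self_pos.2 h, mul_self_nonneg (w 5)]
          · nlinarith [mul_self_pos.2 h, mul_self_nonneg (w 4)]
        obtain ⟨r, hr⟩ : ∃ r, r * (w 4 * w 4 + w 5 * w 5) = 1 := ⟨_, inv_mul_cancel₀ hd⟩
        -- Every `j, k` part is its own orthogonal projection to the line of `(w 4, w 5)`.
        have hmul : ∀ x ∈ u, x 4 = r * (x 4 * w 4 + x 5 * w 5) * w 4 ∧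
            x 5 = r * (x 4 * w 4 + x 5 * w 5) * w 5 := by
          intro x hx
          have := hind x hx w hw
          constructor
          · linear_combination -x 4 * hr + r * w 5 * this
          · linear_combination -x 5 * hr - r * w 4 * this
        have : Module.finrank ℝ u ≤ 3 := by
          refine finrank_le_of_combination
            ![E3, ![w 4, w 5, 0, 0, 0, 0], ![0, 0, 0, 0, w 4, w 5]] fun x hxu =>
            ⟨![x 2, r * (x 0 * w 4 + x 1 * w 5), r * (x 4 * w 4 + x 5 * w 5)], ?_⟩
          obtain ⟨a, b⟩ := hmul _ (hVH x hxu)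
          obtain ⟨c, d⟩ := hmul x hxu
          have e := hx3 x hxu
          simp at a b
          ext i
          fin_cases i <;> simp [E3, Fin.sum_univ_three, ← a, ← b, ← c, ← d, e]
        omega
      · push Not at hx
        have : Module.finrank ℝ u ≤ 1 := by
          refine finrank_le_of_combination ![E3] fun x hxu => ⟨![x 2], ?_⟩
          have h01 := hx _ (hVH x hxu)
          have h45 := hx x hxu
          have e := hx3 x hxu
          simp at h01
          ext i
          fin_cases i <;> simp [E3, h01, h45, e]
        omega

/-- A subspace of `𝔭` of dimension greater than `2` meets the four-dimensional horizontal part,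
the kernel of the vertical coordinates, in a nonzero vector. Normalized, this vector is the image of
`1` in the adapted parametrization for a unit quaternion `q`. -/
theorem exists_frame {v : Submodule ℝ Mq} (hv : 2 < Module.finrank ℝ v) (hle : v ≤ pAlg) :
    ∃ q : Quaternion ℝ, star q * q = 1 ∧ q * star q = 1 ∧ frame q E3 ∈ v := by
  let L : Mq →ₗ[ℝ] (Fin 2 → ℝ) :=
    { toFun := fun M => ![(M 0 0).imJ, (M 0 0).imK]
      map_add' := fun M N => by ext i; fin_cases i <;> simp
      map_smul' := fun c M => by ext i; fin_cases i <;> simp }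
  have : Module.Finite ℝ v := Module.finite_of_finrank_pos (by omega)
  have hker : LinearMap.ker (L ∘ₗ v.subtype) ≠ ⊥ :=
    LinearMap.ker_ne_bot_of_finrank_lt (by simpa using hv)
  obtain ⟨⟨X, hX⟩, hXL, hX0⟩ := Submodule.exists_mem_ne_zero_of_ne_bot hker
  obtain ⟨x, rfl⟩ := exists_pVec (hle hX)
  have h0 : x 0 = 0 := by simpa [L, pVec] using congrFun hXL 0
  have h1 : x 1 = 0 := by simpa [L, pVec] using congrFun hXL 1
  set h : Quaternion ℝ := quat (x 2) (x 3) (x 4) (x 5) with hh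
  have hne : h ≠ 0 := by
    intro hz
    refine hX0 (Subtype.ext ?_)
    have := Quaternion.ext_iff.1 hz
    simp [hh] at this
    obtain ⟨a, b, c, d⟩ := this
    ext i j <;> fin_cases i <;> fin_cases j <;> simp [pVec, *]
  have hr : ‖h‖ ≠ 0 := norm_ne_zero_iff.2 hne
  have hn : Quaternion.normSq h = ‖h‖ * ‖h‖ := Quaternion.normSq_eq_norm_mul_self h
  refine ⟨‖h‖⁻¹ • h, ?_, ?_, ?_⟩
  · rw [Quaternion.star_mul_self, Quaternion.normSq_smul, hn]
    field_simp
    simp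
  · rw [Quaternion.self_mul_star, Quaternion.normSq_smul, hn]
    field_simp
    simp
  · convert v.smul_mem ‖h‖⁻¹ hX using 1
    generalize ‖h‖⁻¹ = c
    rw [frame_apply]
    ext i j <;> fin_cases i <;> fin_cases j <;>
      simp [conjQ_apply, pVec, E3, hh, h0, h1, Matrix.mul_apply, Fin.sum_univ_two]

/-- There is no 4-dimensional subspace of `𝔭` invariant under
`R` and `∇R`: nearly Kähler `ℂP³` has no 4-dimensional totally geodesic
submanifolds. -/
theorem no_four_dimensional_invariant_subspace_CP3
    (πk πp : Mq → Mq)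
    (hdec : ∀ Z ∈ gAlg, πk Z ∈ kAlg ∧ πp Z ∈ pAlg ∧ πk Z + πp Z = Z) :
    ¬ ∃ v : Submodule ℝ Mq, Module.finrank ℝ v = 4 ∧ v ≤ pAlg ∧
      (∀ X ∈ v, ∀ Y ∈ v, ∀ Z ∈ v, Rmap πk πp X Y Z ∈ v) ∧
      (∀ V ∈ v, ∀ X ∈ v, ∀ Y ∈ v, ∀ Z ∈ v, nablaR πk πp V X Y Z ∈ v) := by
  rintro ⟨v, hv, hle, hR, hN⟩
  obtain ⟨q, hq, hq', hE3⟩ := exists_frame (by omega) hle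
  have hmap : (v.comap (frame q)).map (frame q) = v :=
    Submodule.map_comap_eq_self fun M hM => frame_range hq' (hle hM)
  have hinj : Function.Injective (frame q) := (conjQ_injective hq).comp pLin_injective
  refine finrank_ne_four (u := v.comap (frame q)) hE3 ?_ ?_ ?_
  · intro x hx y hy z hz
    rw [Submodule.mem_comap, ← frame_R hdec hq]
    exact hR _ hx _ hy _ hz
  · intro w hw x hx y hy z hz
    rw [Submodule.mem_comap, ← frame_nabla hdec hq]
    exact hN _ hw _ hx _ hy _ hz
  · rw [(Submodule.equivMapOfInjective (frame q) hinj _).finrank_eq, hmap, hv]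

end
end

section
/- The ℝ-linear map φ : 𝔰𝔲(2) → 𝔰𝔭(2) determined on the basis {H, E, F} by φ(H) = i(E₁₁ + 3E₂₂), φ(E) = √3(E₂₁ − E₁₂) + 2jE₁₁, φ(F) = −2kE₁₁ − √3·i(E₁₂ + E₂₁) is an injective homomorphism of real Lie algebras. (It is the differential of the 4-dimensional irreducible complex representation Λ₃ of SU(2), which is of symplectic type.) -/
/-!
The brackets of the basis are `[H, E] = -2F`, `[H, F] = 2E`, `[E, F] = -2H`, and the images
`vH`, `vE`, `vF` satisfy the same three relations (`vH_vE`, `vH_vF`, `vE_vF`); by bilinearity and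
antisymmetry of the bracket (`lie_combination`), `φ` therefore preserves all brackets on the span
of `H, E, F`.
Injectivity is linear independence of `vH`, `vE`, `vF` (`coeffs_eq_zero`), read off the `i`, `j`
and `k` coordinates of the upper left entry, which are `a`, `2b` and `-2c` for `a • vH + b • vE + c • vF`.
-/

/- Setup: `𝔰𝔲(2) = span{H,E,F} ⊆ Mat₂(ℂ)` and `𝔰𝔭(2) ⊆ Mat₂(ℍ)`, both real
Lie algebras under the commutator bracket. -/

noncomputable section
open Matrix

abbrev M2 := Matrix (Fin 2) (Fin 2) ℂ
def Hm : M2 := !![Complex.I, 0; 0, -Complex.I]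
def Em : M2 := !![0, -1; 1, 0]
def Fm : M2 := !![0, Complex.I; Complex.I, 0]

/-- `φ(H) = i(E₁₁ + 3E₂₂)`. -/
def vH : Mq := !![qi, 0; 0, (3 : ℝ) • qi]

/-- `φ(E) = √3(E₂₁ − E₁₂) + 2jE₁₁`. -/
def vE : Mq := Real.sqrt 3 • !![0, -1; 1, 0] + (2 : ℝ) • !![qj, 0; 0, 0]

/-- `φ(F) = −2kE₁₁ − √3·i(E₁₂ + E₂₁)`. -/
def vF : Mq := -((2 : ℝ) • !![qk, 0; 0, 0]) - Real.sqrt 3 • !![0, qi; qi, 0]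

/-- `𝔰𝔲(2) = span{H,E,F}`. -/
def su2 : Submodule ℝ M2 := Submodule.span ℝ {Hm, Em, Fm}

theorem Hm_Em : ⁅Hm, Em⁆ = (-2 : ℝ) • Fm := by
  rw [Ring.lie_def]
  ext i j
  fin_cases i <;> fin_cases j <;> simp [Hm, Em, Fm] <;> ring

theorem Hm_Fm : ⁅Hm, Fm⁆ = (2 : ℝ) • Em := by
  rw [Ring.lie_def]
  ext i j
  fin_cases i <;> fin_cases j <;> simp [Hm, Em, Fm] <;> ring

theorem Em_Fm : ⁅Em, Fm⁆ = (-2 : ℝ) • Hm := by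
  rw [Ring.lie_def]
  ext i j
  fin_cases i <;> fin_cases j <;> simp [Hm, Em, Fm] <;> ring

section Coordinates

open Quaternion

@[simp] theorem qi_re : qi.re = 0 := rfl
@[simp] theorem qi_imI : qi.imI = 1 := rfl
@[simp] theorem qi_imJ : qi.imJ = 0 := rfl
@[simp] theorem qi_imK : qi.imK = 0 := rfl
@[simp] theorem qj_re : qj.re = 0 := rfl
@[simp] theorem qj_imI : qj.imI = 0 := rfl
@[simp] theorem qj_imJ : qj.imJ = 1 := rfl
@[simp] theorem qj_imK : qj.imK = 0 := rfl
@[simp] theorem qk_re : qk.re = 0 := rfl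
@[simp] theorem qk_imI : qk.imI = 0 := rfl
@[simp] theorem qk_imJ : qk.imJ = 0 := rfl
@[simp] theorem qk_imK : qk.imK = 1 := rfl

theorem vE_eq : vE = !![(2 : ℝ) • qj, -(√3 • 1); √3 • 1, 0] := by
  ext1 i j
  fin_cases i <;> fin_cases j <;> simp [vE]

theorem vF_eq : vF = !![-((2 : ℝ) • qk), -(√3 • qi); -(√3 • qi), 0] := by
  ext1 i j
  fin_cases i <;> fin_cases j <;> simp [vF]

theorem vH_vE : ⁅vH, vE⁆ = (-2 : ℝ) • vF := by
  rw [Ring.lie_def, vE_eq, vF_eq, vH, Matrix.mul_fin_two, Matrix.mul_fin_two]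
  ext1 i j
  fin_cases i <;> fin_cases j <;> apply Quaternion.ext <;>
    simp [Quaternion.re_mul, Quaternion.imI_mul, Quaternion.imJ_mul, Quaternion.imK_mul] <;> ring

theorem vH_vF : ⁅vH, vF⁆ = (2 : ℝ) • vE := by
  rw [Ring.lie_def, vE_eq, vF_eq, vH, Matrix.mul_fin_two, Matrix.mul_fin_two]
  ext1 i j
  fin_cases i <;> fin_cases j <;> apply Quaternion.ext <;>
    simp [Quaternion.re_mul, Quaternion.imI_mul, Quaternion.imJ_mul, Quaternion.imK_mul] <;> ring

/-- The only one of the three relations that depends on the value of the coefficient `√3`. -/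
theorem vE_vF : ⁅vE, vF⁆ = (-2 : ℝ) • vH := by
  have h3 : √3 * √3 = 3 := Real.mul_self_sqrt (by norm_num)
  rw [Ring.lie_def, vE_eq, vF_eq, vH, Matrix.mul_fin_two, Matrix.mul_fin_two]
  ext1 i j
  fin_cases i <;> fin_cases j <;> apply Quaternion.ext <;>
    simp [Quaternion.re_mul, Quaternion.imI_mul, Quaternion.imJ_mul, Quaternion.imK_mul] <;>
    linarith

/-- `vH`, `vE`, `vF` are linearly independent over `ℝ`. -/
theorem coeffs_eq_zero {a b c : ℝ} (h : a • vH + b • vE + c • vF = 0) :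
    a = 0 ∧ b = 0 ∧ c = 0 := by
  have h00 : a • qi + b • (2 : ℝ) • qj + c • -((2 : ℝ) • qk) = 0 := by
    rw [vE_eq, vF_eq] at h
    exact congrFun (congrFun h 0) 0
  have hi := congrArg (fun q : Quaternion ℝ => q.imI) h00
  have hj := congrArg (fun q : Quaternion ℝ => q.imJ) h00
  have hk := congrArg (fun q : Quaternion ℝ => q.imK) h00
  simp at hi hj hk
  exact ⟨hi, hj, hk⟩

end Coordinates

/-- The commutator of two combinations of `h, e, f`, by bilinearity and antisymmetry. It is stated
for the bracket of an associative ring, since the `LieRing` structure of a ring is not a global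
instance. -/
theorem lie_combination {A : Type*} [Ring A] [Algebra ℝ A] (h e f : A) (a b c a' b' c' : ℝ) :
    ⁅a • h + b • e + c • f, a' • h + b' • e + c' • f⁆ =
      (a * b' - b * a') • ⁅h, e⁆ + (a * c' - c * a') • ⁅h, f⁆ + (b * c' - c * b') • ⁅e, f⁆ := by
  simp only [Ring.lie_def, mul_add, add_mul, smul_mul_smul_comm]
  module

theorem mem_su2 {X : M2} (hX : X ∈ su2) :
    ∃ a b c : ℝ, X = a • Hm + b • Em + c • Fm := by
  obtain ⟨a, b, c, h⟩ := Submodule.mem_span_triple.1 hX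
  exact ⟨a, b, c, h.symm⟩

/-- The `ℝ`-linear map `φ : 𝔰𝔲(2) → 𝔰𝔭(2)` determined on the
basis `{H,E,F}` by the values above is an injective homomorphism of real Lie
algebras (the differential of the 4-dimensional irreducible complex
representation `Λ₃` of `SU(2)`, which is of symplectic type). -/
theorem su2_to_sp2_injective_lie_hom
    (φ : M2 →ₗ[ℝ] Mq) (hH : φ Hm = vH) (hE : φ Em = vE) (hF : φ Fm = vF) :
    (∀ X ∈ su2, ∀ Y ∈ su2, φ ⁅X, Y⁆ = ⁅φ X, φ Y⁆) ∧
      Set.InjOn φ (su2 : Set M2) := by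
  refine ⟨fun X hX Y hY => ?_, fun X hX Y hY hXY => ?_⟩
  · obtain ⟨a, b, c, rfl⟩ := mem_su2 hX
    obtain ⟨a', b', c', rfl⟩ := mem_su2 hY
    simp only [map_add, map_smul, hH, hE, hF, lie_combination,
      Hm_Em, Hm_Fm, Em_Fm, vH_vE, vH_vF, vE_vF]
  · obtain ⟨a, b, c, h⟩ := mem_su2 (su2.sub_mem hX hY)
    have h0 : φ (X - Y) = 0 := by rw [map_sub, hXY, sub_self]
    rw [h] at h0
    simp only [map_add, map_smul, hH, hE, hF] at h0
    obtain ⟨rfl, rfl, rfl⟩ := coeffs_eq_zero h0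
    exact sub_eq_zero.1 (by simpa using h)

end
end
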